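/- Let f be a quasiperiodically forced circle homeomorphism over an irrational ω with lift F whose fibered rotation number is ρ. Assume that ω, ρ and 1 are rationally independent, i.e. there is no (a,b,c) ∈ ℤ³ \ {(0,0,0)} with aω + bρ + c = 0. Then the fibered rotation number is strictly monotone at f: for every ε > 0, if ρ₊ is the fibered rotation number of the perturbed lift F_ε and ρ₋ is the fibered rotation number of F_{−ε}, then ρ₋ < ρ < ρ₊. -/

import Mathlib

open Filter Topology MeasureTheory
open scoped ENNReal

noncomputable section

/-- The circle `T¹ = ℝ/ℤ`. -/
abbrev T1 := AddCircle (1 : ℝ)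

/-- Fiberwise iterate of the skew product: `fiberIter ω F n θ x = F^n_θ(x)`. -/
def fiberIter (ω : ℝ) (F : T1 → ℝ → ℝ) : ℕ → T1 → ℝ → ℝ
  | 0, _, x => x
  | n + 1, θ, x => fiberIter ω F n (θ + (ω : T1)) (F θ x)

/-- `F` is (the fiber part of) a lift of a quasiperiodically forced circle homeomorphism
over `ω`: `F(θ,x) = (θ+ω, F_θ(x))`, each `F_θ` a strictly increasing homeomorphism of `ℝ`
commuting with `x ↦ x+1`. -/
structure IsQpfLift (ω : ℝ) (F : T1 → ℝ → ℝ) : Prop where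
  cont : Continuous fun p : T1 × ℝ => F p.1 p.2
  mono : ∀ θ, StrictMono (F θ)
  surj : ∀ θ, Function.Surjective (F θ)
  per  : ∀ θ x, F θ (x + 1) = F θ x + 1

/-- `ρ` is the fibered rotation number of the lift `F`. -/
def HasRotNum (ω : ℝ) (F : T1 → ℝ → ℝ) (ρ : ℝ) : Prop :=
  ∀ θ x, Tendsto (fun n : ℕ => (fiberIter ω F n θ x - x) / n) atTop (𝓝 ρ)

/-- `ω`, `ρ` and `1` are rationally independent. -/
def RatIndep (ω ρ : ℝ) : Prop :=
  ∀ a b c : ℤ, (a : ℝ) * ω + (b : ℝ) * ρ + (c : ℝ) = 0 → a = 0 ∧ b = 0 ∧ c = 0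

/-!
Suppose `ψ` moves strictly faster than `φ` but has no larger rotation number. The *drift*
`(φ^n)⁻¹ ψ^(n-m) φ^m` of `ψ` relative to `φ` during `[m, n]` then stays bounded, for otherwise `ψ`
would gain a full turn on `φ` in a bounded time. So the supremum `S` of all drifts is finite; it is
a monotone, in general discontinuous, family of fibre maps that commutes with `φ`. Let `N` be the
largest number of applications of `S` that fit into one full turn at some point. Such points lie
over a dense orbit, hence over every `θ`, and by maximality of `N` two sufficiently long drifts
carry each of them beyond one application of `S`. This forces `S a = S a'` for any two of them with
`a ≤ a' < S a`, since a gap between `S a` and `S a'` would leave room for those two drifts.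

A continuous coordinate `h` of degree one that collapses such blocks `[a, a']` restores continuity:
the chain sum `∑_{i<N} h (S^i a)` changes by an integer when `a` is replaced by another such point
of the same fibre, so it defines a continuous function `G` from the base to `ℝ/ℤ`, and its increment
along `φ` is a continuous real function `D` with `D θ ≡ G (θ + ω) - G θ` modulo `1`. The mean of `D`
is `N ρ`, while the lift of `G` computes it as an element of `ℤ + ω ℤ`; rational independence
excludes this.
-/

/-! ### Cocycles of circle homeomorphisms -/

section Fibers

theorem strictMono_units (u : CircleDeg1Liftˣ) : StrictMono u :=
  (CircleDeg1Lift.toOrderIso u).strictMono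

theorem continuous_uncurry_units_inv {X : Type*} [TopologicalSpace X] {u : X → CircleDeg1Liftˣ}
    (hu : Continuous fun p : X × ℝ => u p.1 p.2) : Continuous fun p : X × ℝ => (u p.1)⁻¹ p.2 := by
  have lt_inv : ∀ (p : X × ℝ) a, a < (u p.1)⁻¹ p.2 ↔ u p.1 a < p.2 := fun p a => by
    rw [← (strictMono_units (u p.1)).lt_iff_lt, CircleDeg1Lift.units_apply_inv_apply]
  have inv_lt : ∀ (p : X × ℝ) a, (u p.1)⁻¹ p.2 < a ↔ p.2 < u p.1 a := fun p a => by
    rw [← (strictMono_units (u p.1)).lt_iff_lt, CircleDeg1Lift.units_apply_inv_apply]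
  have hua : ∀ a, Continuous fun p : X × ℝ => u p.1 a := fun a =>
    hu.comp (continuous_fst.prodMk continuous_const)
  refine continuous_iff_continuousAt.2 fun p => tendsto_order.2 ⟨fun a ha => ?_, fun a ha => ?_⟩
  · simp only [lt_inv] at ha ⊢
    exact (hua a).continuousAt.eventually_lt continuousAt_snd ha
  · simp only [inv_lt] at ha ⊢
    exact continuousAt_snd.eventually_lt (hua a).continuousAt ha

end Fibers

/-- A cocycle of circle homeomorphisms over the translation by `α`: the value `toFun n θ` is the
`n`-th iterate, on the fibre over `θ`, of a lift of a fibred circle homeomorphism. The fibre maps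
are the units of `CircleDeg1Lift`, that is, the lifts of orientation-preserving circle
homeomorphisms. -/
structure FiberedCocycle {B : Type*} [AddCommGroup B] [TopologicalSpace B] (α : B) where
  toFun : ℤ → B → CircleDeg1Liftˣ
  map_add' : ∀ m n θ, toFun (m + n) θ = toFun m (θ + n • α) * toFun n θ
  continuous' : ∀ n, Continuous fun p : B × ℝ => toFun n p.1 p.2

namespace FiberedCocycle

variable {B : Type*} [AddCommGroup B] [TopologicalSpace B] {α : B}

instance : CoeFun (FiberedCocycle α) fun _ => ℤ → B → CircleDeg1Liftˣ := ⟨toFun⟩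

theorem map_add (φ : FiberedCocycle α) (m n : ℤ) (θ : B) :
    φ (m + n) θ = φ m (θ + n • α) * φ n θ :=
  φ.map_add' m n θ

theorem map_zero (φ : FiberedCocycle α) (θ : B) : φ 0 θ = 1 := by
  simpa using φ.map_add 0 0 θ

theorem map_add_apply (φ : FiberedCocycle α) (m n : ℤ) (θ : B) (x : ℝ) :
    φ (m + n) θ x = φ m (θ + n • α) (φ n θ x) := by
  rw [map_add]; rfl

theorem continuous (φ : FiberedCocycle α) (n : ℤ) : Continuous fun p : B × ℝ => φ n p.1 p.2 :=
  φ.continuous' n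

/-- The cocycle `φ` has fibered rotation number `ρ`. -/
def HasRotationNumber (φ : FiberedCocycle α) (ρ : ℝ) : Prop :=
  ∀ θ x, Tendsto (fun n : ℕ => (φ n θ x - x) / n) atTop (𝓝 ρ)

theorem continuous_of_cocycle [ContinuousAdd B] {c : ℤ → B → CircleDeg1Liftˣ}
    (hadd : ∀ m n θ, c (m + n) θ = c m (θ + n • α) * c n θ)
    (hone : Continuous fun p : B × ℝ => c 1 p.1 p.2) (n : ℤ) :
    Continuous fun p : B × ℝ => c n p.1 p.2 := by
  have hfst : ∀ k : ℤ, Continuous fun p : B × ℝ => p.1 + k • α := fun k => by fun_prop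
  induction n using Int.induction_on with
  | zero =>
    have hzero : ∀ θ, c 0 θ = 1 := fun θ => by simpa using hadd 0 0 θ
    simp only [hzero]
    exact continuous_snd
  | succ n ih =>
    simp only [add_comm (n : ℤ) 1, hadd]
    exact hone.comp ((hfst n).prodMk ih)
  | pred n ih =>
    have hpred : ∀ θ, c (-n - 1) θ = (c 1 (θ + (-n - 1 : ℤ) • α))⁻¹ * c (-n) θ := fun θ => by
      rw [eq_inv_mul_iff_mul_eq, ← hadd, add_sub_cancel]
    simp only [hpred]
    exact (continuous_uncurry_units_inv hone).comp ((hfst _).prodMk ih)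

open SemidirectProduct in
theorem exists_map_one_eq [ContinuousAdd B] (α : B) {u : B → CircleDeg1Liftˣ}
    (hu : Continuous fun p : B × ℝ => u p.1 p.2) : ∃ φ : FiberedCocycle α, ∀ θ, φ 1 θ = u θ := by
  let s : (B → CircleDeg1Liftˣ) ⋊[mulAutArrow] Multiplicative B :=
    ⟨fun θ => u (θ - α), Multiplicative.ofAdd α⟩
  let c : ℤ → B → CircleDeg1Liftˣ := fun n θ => (s ^ n).left (θ + n • α)
  have hright : ∀ n : ℤ, (s ^ n).right = Multiplicative.ofAdd (n • α) := fun n => by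
    rw [← rightHom_eq_right, map_zpow, rightHom_eq_right, ← ofAdd_zsmul]
  have hone : ∀ θ, c 1 θ = u θ := fun θ => by simp [c, s]
  have hadd : ∀ m n θ, c (m + n) θ = c m (θ + n • α) * c n θ := fun m n θ => by
    have hm : θ + (m + n) • α = θ + n • α + m • α := by rw [add_smul]; abel
    have hn : -(m • α) + (θ + (m + n) • α) = θ + n • α := by rw [add_smul]; abel
    calc c (m + n) θ = (s ^ m).left (θ + (m + n) • α) *
          (mulAutArrow (s ^ m).right (s ^ n).left) (θ + (m + n) • α) := by
          simp only [c, zpow_add, mul_left, Pi.mul_apply]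
      _ = (s ^ m).left (θ + (m + n) • α) * (s ^ n).left (-(m • α) + (θ + (m + n) • α)) := by
          rw [hright]; rfl
      _ = c m (θ + n • α) * c n θ := by rw [hn, hm]
  exact ⟨⟨c, hadd, continuous_of_cocycle hadd (by simpa only [hone] using hu)⟩, hone⟩

variable {φ ψ : FiberedCocycle α}

/-! ### Drift -/

/-- The drift of `ψ` relative to `φ` during the time interval `[m, n]`: follow `φ` up to time `m`
and then `ψ` up to time `n`, and pull the result back to time `0` along `φ`. -/
def drift (φ ψ : FiberedCocycle α) (m n : ℤ) (θ : B) : CircleDeg1Liftˣ :=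
  (φ n θ)⁻¹ * ψ n θ * (ψ m θ)⁻¹ * φ m θ

theorem drift_self (φ ψ : FiberedCocycle α) (n : ℤ) (θ : B) : φ.drift ψ n n θ = 1 := by
  simp only [drift, mul_inv_cancel_right, inv_mul_cancel]

theorem drift_mul_drift (φ ψ : FiberedCocycle α) (k m n : ℤ) (θ : B) :
    φ.drift ψ m n θ * φ.drift ψ k m θ = φ.drift ψ k n θ := by
  simp only [drift]; group

theorem drift_drift (φ ψ : FiberedCocycle α) (k m n : ℤ) (θ : B) (x : ℝ) :
    φ.drift ψ m n θ (φ.drift ψ k m θ x) = φ.drift ψ k n θ x := by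
  rw [← drift_mul_drift φ ψ k m n θ]; rfl

theorem semiconjBy_drift (φ ψ : FiberedCocycle α) (k m n : ℤ) (θ : B) :
    SemiconjBy (φ k θ) (φ.drift ψ (m + k) (n + k) θ) (φ.drift ψ m n (θ + k • α)) := by
  simp only [SemiconjBy, drift, map_add]; group

theorem map_drift (φ ψ : FiberedCocycle α) (k m n : ℤ) (θ : B) (x : ℝ) :
    φ k θ (φ.drift ψ (m + k) (n + k) θ x) = φ.drift ψ m n (θ + k • α) (φ k θ x) :=
  congrArg (fun u : CircleDeg1Liftˣ => u x) (semiconjBy_drift φ ψ k m n θ)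

theorem map_drift_zero (φ ψ : FiberedCocycle α) (n : ℤ) (θ : B) (x : ℝ) :
    φ n θ (φ.drift ψ 0 n θ x) = ψ n θ x := by
  have hmul : φ n θ * φ.drift ψ 0 n θ = ψ n θ := by simp only [drift, map_zero]; group
  rw [← hmul]; rfl

theorem continuous_drift (φ ψ : FiberedCocycle α) (m n : ℤ) :
    Continuous fun p : B × ℝ => φ.drift ψ m n p.1 p.2 := by
  have hφ := φ.continuous m
  have hψ := (continuous_uncurry_units_inv (ψ.continuous m)).comp (continuous_fst.prodMk hφ)
  exact (continuous_uncurry_units_inv (φ.continuous n)).comp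
    (continuous_fst.prodMk ((ψ.continuous n).comp (continuous_fst.prodMk hψ)))

theorem lt_drift_succ (hlt : ∀ θ x, φ 1 θ x < ψ 1 θ x) (n : ℤ) (θ : B) (x : ℝ) :
    x < φ.drift ψ n (n + 1) θ x := by
  have hdrift : φ.drift ψ n (n + 1) θ = (φ (n + 1) θ)⁻¹ * (ψ 1 (θ + n • α) * φ n θ) := by
    rw [drift, add_comm n 1, ψ.map_add]; group
  rw [← (strictMono_units (φ (n + 1) θ)).lt_iff_lt, hdrift]
  calc φ (n + 1) θ x = φ 1 (θ + n • α) (φ n θ x) := by rw [add_comm, map_add_apply]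
    _ < ψ 1 (θ + n • α) (φ n θ x) := hlt _ _
    _ = φ (n + 1) θ ((φ (n + 1) θ)⁻¹ (ψ 1 (θ + n • α) (φ n θ x))) :=
      (CircleDeg1Lift.units_apply_inv_apply _ _).symm

theorem le_drift (hlt : ∀ θ x, φ 1 θ x < ψ 1 θ x) {m n : ℤ} (hmn : m ≤ n) (θ : B) (x : ℝ) :
    x ≤ φ.drift ψ m n θ x := by
  induction n, hmn using Int.leInduction with
  | base => rw [drift_self]; exact le_rfl
  | succ n _ ih =>
    rw [← drift_drift φ ψ m n (n + 1)]
    exact ih.trans (lt_drift_succ hlt n θ _).le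

theorem drift_le_drift (hlt : ∀ θ x, φ 1 θ x < ψ 1 θ x) {m m' n n' : ℤ} (hm : m' ≤ m)
    (hn : n ≤ n') (θ : B) (x : ℝ) : φ.drift ψ m n θ x ≤ φ.drift ψ m' n' θ x := by
  rw [← drift_drift φ ψ m' m n', ← drift_drift φ ψ m n n']
  exact (le_drift hlt hn θ _).trans
    ((φ.drift ψ n n' θ).1.mono ((φ.drift ψ m n θ).1.mono (le_drift hlt hm θ x)))

theorem drift_lt_drift_of_lt {m n : ℤ} {θ : B} {x y : ℝ} (h : y < φ.drift ψ m n θ x) (k : ℤ) :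
    φ.drift ψ n k θ y < φ.drift ψ m k θ x := by
  rw [← drift_drift φ ψ m n k]
  exact strictMono_units _ h

end FiberedCocycle

theorem exists_eq_univ_of_monotone_of_periodic {B : Type*} [TopologicalSpace B] [CompactSpace B]
    {U : ℕ → Set (B × ℝ)} (hmono : Monotone U) (hopen : ∀ i, IsOpen (U i))
    (hper : ∀ i θ x (m : ℤ), (θ, x) ∈ U i → (θ, x + m) ∈ U i) (hcover : ∀ p, ∃ i, p ∈ U i) :
    ∃ i, U i = Set.univ := by
  have hcompact : IsCompact (Set.univ ×ˢ Set.Icc 0 1 : Set (B × ℝ)) :=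
    isCompact_univ.prod isCompact_Icc
  obtain ⟨i, hi⟩ := hcompact.elim_directed_cover U hopen
    (fun p _ => Set.mem_iUnion.2 (hcover p)) hmono.directed_le
  refine ⟨i, Set.eq_univ_of_forall fun ⟨θ, x⟩ => ?_⟩
  have hmem := hi (show (θ, Int.fract x) ∈ Set.univ ×ˢ Set.Icc 0 1 from
    ⟨trivial, Int.fract_nonneg x, (Int.fract_lt_one x).le⟩)
  simpa only [Int.fract_add_floor] using hper i θ _ ⌊x⌋ hmem

theorem denseRange_add_zsmul {B : Type*} [AddCommGroup B] [TopologicalSpace B] [ContinuousAdd B]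
    {α : B} (hα : DenseRange fun n : ℤ => n • α) (θ : B) : DenseRange fun n : ℤ => θ + n • α :=
  (Homeomorph.addLeft θ).surjective.denseRange.comp hα (Homeomorph.addLeft θ).continuous

theorem map_le_add_of_le_add {f : CircleDeg1Lift} {x c : ℝ} (h : f x ≤ x + c) (y : ℝ) :
    f y ≤ y + c + 1 := by
  calc f y ≤ f (x + ⌈y - x⌉) := f.mono (by linarith [Int.le_ceil (y - x)])
    _ = f x + ⌈y - x⌉ := f.map_add_int x _
    _ ≤ y + c + 1 := by linarith [Int.ceil_lt_add_one (y - x)]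

theorem continuous_uncurry_pow {X : Type*} [TopologicalSpace X] {f : X → CircleDeg1Lift}
    (hf : Continuous fun p : X × ℝ => f p.1 p.2) (j : ℕ) :
    Continuous fun p : X × ℝ => (f p.1 ^ j) p.2 := by
  induction j with
  | zero => exact continuous_snd
  | succ j ih =>
    simp only [pow_succ']
    exact hf.comp (continuous_fst.prodMk ih)

namespace FiberedCocycle

variable {B : Type*} [AddCommGroup B] [TopologicalSpace B] {α : B} {φ ψ : FiberedCocycle α}

theorem add_natCast_le_mul {n : ℕ} (h : ∀ θ x, φ n θ x + 1 ≤ ψ n θ x) (k : ℕ) (θ : B) (x : ℝ) :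
    φ (k * n : ℕ) θ x + k ≤ ψ (k * n : ℕ) θ x := by
  induction k with
  | zero => simp [map_zero]
  | succ k ih =>
    have hk : (((k + 1) * n : ℕ) : ℤ) = n + (k * n : ℕ) := by push_cast; ring
    set θ' := θ + ((k * n : ℕ) : ℤ) • α with hθ'
    rw [hk, map_add_apply, map_add_apply, ← hθ']
    calc φ n θ' (φ (k * n : ℕ) θ x) + ((k + 1 : ℕ) : ℝ)
        = φ n θ' (φ (k * n : ℕ) θ x + k) + 1 := by
          rw [CircleDeg1Lift.map_add_nat]; push_cast; ring
      _ ≤ φ n θ' (ψ (k * n : ℕ) θ x) + 1 := by gcongr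
      _ ≤ ψ n θ' (ψ (k * n : ℕ) θ x) := h θ' _

theorem HasRotationNumber.add_inv_le {ρ σ : ℝ} (hφ : φ.HasRotationNumber ρ)
    (hψ : ψ.HasRotationNumber σ) {n : ℕ} (hn : 0 < n) (h : ∀ θ x, φ n θ x + 1 ≤ ψ n θ x) :
    ρ + (n : ℝ)⁻¹ ≤ σ := by
  have hsub : Tendsto (fun k : ℕ => k * n) atTop atTop := tendsto_id.atTop_mul_const' hn
  refine le_of_tendsto_of_tendsto (((hφ 0 0).comp hsub).add_const _) ((hψ 0 0).comp hsub) ?_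
  filter_upwards [eventually_gt_atTop 0] with k hk
  have hinv : (n : ℝ)⁻¹ = k / (k * n : ℕ) := by push_cast; field_simp
  simp only [Function.comp_apply]
  rw [hinv, ← add_div]
  gcongr
  linarith [add_natCast_le_mul h k 0 0]

theorem exists_forall_add_one_lt_drift_pow [CompactSpace B]
    (hlt : ∀ θ x, φ 1 θ x < ψ 1 θ x) {j : ℕ}
    (h : ∀ θ x, ∃ M : ℕ, x + 1 < ((φ.drift ψ (-M) M θ : CircleDeg1Lift) ^ j) x) :
    ∃ M : ℕ, ∀ θ x, x + 1 < ((φ.drift ψ (-M) M θ : CircleDeg1Lift) ^ j) x := by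
  let U : ℕ → Set (B × ℝ) := fun M =>
    {p | p.2 + 1 < ((φ.drift ψ (-M) M p.1 : CircleDeg1Lift) ^ j) p.2}
  have hmono : Monotone U := fun M M' hM p hp =>
    hp.trans_le
      (CircleDeg1Lift.pow_mono (fun x => drift_le_drift hlt (by omega) (by omega) _ x) j _)
  have hopen : ∀ M, IsOpen (U M) := fun M =>
    isOpen_lt (by fun_prop) (continuous_uncurry_pow
      (f := fun θ => (φ.drift ψ (-M) M θ : CircleDeg1Lift)) (continuous_drift φ ψ _ _) j)
  have hper : ∀ M θ x (m : ℤ), (θ, x) ∈ U M → (θ, x + m) ∈ U M := fun M θ x m hp => by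
    simp only [U, Set.mem_ofPred_eq, CircleDeg1Lift.map_add_int] at hp ⊢
    linarith
  obtain ⟨M, hM⟩ := exists_eq_univ_of_monotone_of_periodic hmono hopen hper fun p => h p.1 p.2
  exact ⟨M, fun θ x => Set.eq_univ_iff_forall.1 hM (θ, x)⟩

theorem HasRotationNumber.exists_drift_le [CompactSpace B] {ρ σ : ℝ}
    (hφ : φ.HasRotationNumber ρ) (hψ : ψ.HasRotationNumber σ) (hσρ : σ ≤ ρ)
    (hlt : ∀ θ x, φ 1 θ x < ψ 1 θ x) : ∃ θ x, ∀ M : ℕ, φ.drift ψ (-M) M θ x ≤ x + 1 := by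
  by_contra! hfar
  obtain ⟨M, hM⟩ := exists_forall_add_one_lt_drift_pow hlt (j := 1) (by simpa using hfar)
  simp only [pow_one] at hM
  have hM₀ : 0 < M := by
    refine Nat.pos_of_ne_zero fun h0 => ?_
    have h := hM 0 0
    norm_num [h0, drift_self] at h
  have hle : ∀ θ x, φ (2 * M : ℕ) θ x + 1 ≤ ψ (2 * M : ℕ) θ x := fun θ x => by
    have hdrift : x + 1 ≤ φ.drift ψ 0 (2 * M : ℕ) θ x := by
      have h := hM (θ + (M : ℤ) • α) (φ M θ x)
      rw [← map_drift, ← CircleDeg1Lift.map_add_one, (strictMono_units _).lt_iff_lt,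
        neg_add_cancel, ← two_mul] at h
      exact_mod_cast h.le
    rw [← map_drift_zero φ ψ, ← CircleDeg1Lift.map_add_one]
    exact (φ (2 * M : ℕ) θ).1.mono hdrift
  linarith [hφ.add_inv_le hψ (by omega) hle, show 0 < ((2 * M : ℕ) : ℝ)⁻¹ by positivity]

theorem drift_le_add_two [ContinuousAdd B] {θ₀ : B} {x₀ : ℝ} (hα : DenseRange fun n : ℤ => n • α)
    (h : ∀ m n, φ.drift ψ m n θ₀ x₀ ≤ x₀ + 1) (m n : ℤ) (θ : B) (x : ℝ) :
    φ.drift ψ m n θ x ≤ x + 2 := by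
  refine (denseRange_add_zsmul hα θ₀).induction_on θ (isClosed_le ?_ continuous_const) fun k => ?_
  · exact (continuous_drift φ ψ m n).comp (by fun_prop : Continuous fun θ : B => (θ, x))
  · have hk : φ.drift ψ m n (θ₀ + k • α) (φ k θ₀ x₀) ≤ φ k θ₀ x₀ + 1 := by
      rw [← map_drift, ← CircleDeg1Lift.map_add_one]
      exact (φ k θ₀).1.mono (h _ _)
    linarith [map_le_add_of_le_add hk x]

end FiberedCocycle

/-! ### Total drift -/

theorem add_mul_le_pow_apply {f : CircleDeg1Lift} {δ : ℝ} (hf : ∀ x, x + δ ≤ f x) (j : ℕ)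
    (x : ℝ) : x + j * δ ≤ (f ^ j) x := by
  induction j with
  | zero => simp
  | succ j ih =>
    rw [pow_succ']
    push_cast
    linarith [hf ((f ^ j) x), f.mul_apply (f ^ j) x]

namespace FiberedCocycle

variable {B : Type*} [AddCommGroup B] [TopologicalSpace B] {α : B} {φ ψ : FiberedCocycle α}
  {S : B → CircleDeg1Lift}

/-- `S` is the total drift of `ψ` relative to `φ`: on each fibre, the supremum of the drifts during
the time intervals `[-M, M]`, where `ψ` is supposed to move strictly faster than `φ`. -/
structure IsTotalDrift (φ ψ : FiberedCocycle α) (S : B → CircleDeg1Lift) : Prop where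
  lt : ∀ θ x, φ 1 θ x < ψ 1 θ x
  isLUB : ∀ θ x, IsLUB (Set.range fun M : ℕ => φ.drift ψ (-M) M θ x) (S θ x)

theorem exists_isTotalDrift (hlt : ∀ θ x, φ 1 θ x < ψ 1 θ x)
    (hbdd : ∀ θ x, BddAbove (Set.range fun M : ℕ => φ.drift ψ (-M) M θ x)) :
    ∃ S, IsTotalDrift φ ψ S :=
  ⟨fun θ =>
    { toFun := fun x => ⨆ M : ℕ, φ.drift ψ (-M) M θ x
      monotone' := fun x y hxy => ciSup_mono (hbdd θ y) fun M => (φ.drift ψ (-M) M θ).1.mono hxy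
      map_add_one' := fun x => by
        simp only [CircleDeg1Lift.map_add_one]
        exact (ciSup_add (hbdd θ x) 1).symm },
    hlt, fun θ x => isLUB_ciSup (hbdd θ x)⟩

namespace IsTotalDrift

theorem drift_le (h : IsTotalDrift φ ψ S) (m n : ℤ) (θ : B) (x : ℝ) :
    φ.drift ψ m n θ x ≤ S θ x := by
  set M := max m.natAbs n.natAbs
  exact (drift_le_drift h.lt (m' := -M) (n' := M) (by omega) (by omega) θ x).trans
    ((h.isLUB θ x).1 (Set.mem_range_self M))

theorem lt_apply (h : IsTotalDrift φ ψ S) (θ : B) (x : ℝ) : x < S θ x :=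
  (lt_drift_succ h.lt 0 θ x).trans_le (h.drift_le _ _ θ x)

theorem exists_lt_drift (h : IsTotalDrift φ ψ S) {θ : B} {x z : ℝ} (hz : z < S θ x) :
    ∃ M : ℕ, z < φ.drift ψ (-M) M θ x := by
  obtain ⟨_, ⟨M, rfl⟩, hM⟩ := (lt_isLUB_iff (h.isLUB θ x)).1 hz
  exact ⟨M, hM⟩

theorem semiconjBy (h : IsTotalDrift φ ψ S) (k : ℤ) (θ : B) :
    SemiconjBy (φ k θ : CircleDeg1Lift) (S θ) (S (θ + k • α)) := by
  refine CircleDeg1Lift.ext fun x => le_antisymm ?_ ((h.isLUB _ _).2 ?_)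
  · change φ k θ (S θ x) ≤ S (θ + k • α) (φ k θ x)
    rw [← CircleDeg1Lift.units_apply_inv_apply (φ k θ) (S (θ + k • α) (φ k θ x)),
      (strictMono_units _).le_iff_le]
    refine (h.isLUB θ x).2 ?_
    rintro _ ⟨M, rfl⟩
    rw [← (strictMono_units (φ k θ)).le_iff_le, CircleDeg1Lift.units_apply_inv_apply]
    have hM := map_drift φ ψ k (-M - k) (M - k) θ x
    rw [sub_add_cancel, sub_add_cancel] at hM
    exact hM.trans_le (h.drift_le _ _ _ _)
  · rintro _ ⟨M, rfl⟩
    exact (map_drift φ ψ k (-M) M θ x).symm.trans_le ((φ k θ).1.mono (h.drift_le _ _ _ _))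

theorem map_pow (h : IsTotalDrift φ ψ S) (k : ℤ) (j : ℕ) (θ : B) (x : ℝ) :
    φ k θ ((S θ ^ j) x) = (S (θ + k • α) ^ j) (φ k θ x) :=
  DFunLike.congr_fun ((h.semiconjBy k θ).pow_right j) x

theorem exists_lt_drift_pow (h : IsTotalDrift φ ψ S) (j : ℕ) {θ : B} {x z : ℝ}
    (hz : z < (S θ ^ j) x) : ∃ M : ℕ, z < ((φ.drift ψ (-M) M θ : CircleDeg1Lift) ^ j) x := by
  induction j generalizing z with
  | zero => exact ⟨0, hz⟩
  | succ j ih =>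
    rw [pow_succ'] at hz
    obtain ⟨M₁, hM₁⟩ := h.exists_lt_drift hz
    set y := (φ.drift ψ (-M₁) M₁ θ)⁻¹ z
    have hy : φ.drift ψ (-M₁) M₁ θ y = z := CircleDeg1Lift.units_apply_inv_apply _ _
    rw [← hy, (strictMono_units _).lt_iff_lt] at hM₁
    obtain ⟨M₂, hM₂⟩ := ih hM₁
    set M := max M₁ M₂
    refine ⟨M, ?_⟩
    have hdrift : ∀ {M' : ℕ}, M' ≤ M → ∀ x, φ.drift ψ (-M') M' θ x ≤ φ.drift ψ (-M) M θ x :=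
      fun hM' => drift_le_drift h.lt (by omega) (by omega) θ
    rw [pow_succ']
    calc z ≤ φ.drift ψ (-M) M θ y := hy.symm.trans_le (hdrift (le_max_left _ _) y)
      _ < φ.drift ψ (-M) M θ (((φ.drift ψ (-M) M θ : CircleDeg1Lift) ^ j) x) :=
        strictMono_units _ (hM₂.trans_le
          (CircleDeg1Lift.pow_mono (hdrift (le_max_right _ _)) j x))

theorem isClosed_setOf_pow_le (h : IsTotalDrift φ ψ S) (j : ℕ) :
    IsClosed {p : (B × ℝ) × ℝ | (S p.1.1 ^ j) p.1.2 ≤ p.2} := by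
  have heq : {p : (B × ℝ) × ℝ | (S p.1.1 ^ j) p.1.2 ≤ p.2} =
      ⋂ M : ℕ, {p | ((φ.drift ψ (-M) M p.1.1 : CircleDeg1Lift) ^ j) p.1.2 ≤ p.2} := by
    ext p
    refine ⟨fun hp => Set.mem_iInter.2 fun M =>
      (CircleDeg1Lift.pow_mono (h.drift_le _ _ p.1.1) j _).trans hp, fun hp => ?_⟩
    by_contra! hlt
    obtain ⟨M, hM⟩ := h.exists_lt_drift_pow j (not_le.1 hlt)
    exact hM.not_ge (Set.mem_iInter.1 hp M)
  rw [heq]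
  exact isClosed_iInter fun M => isClosed_le ((continuous_uncurry_pow
    (f := fun θ => (φ.drift ψ (-M) M θ : CircleDeg1Lift)) (continuous_drift φ ψ _ _) j).comp
      continuous_fst) continuous_snd

theorem exists_gap [CompactSpace B] (h : IsTotalDrift φ ψ S) :
    ∃ δ > 0, ∀ θ x, x + δ ≤ S θ x := by
  let U : ℕ → Set (B × ℝ) := fun i => {p | p.2 + 1 / (i + 1 : ℝ) < φ.drift ψ 0 1 p.1 p.2}
  have hmono : Monotone U := fun i j hij p hp =>
    (add_le_add_right (Nat.one_div_le_one_div hij) p.2).trans_lt hp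
  have hopen : ∀ i, IsOpen (U i) := fun i => isOpen_lt (by fun_prop) (continuous_drift φ ψ 0 1)
  have hper : ∀ i θ x (m : ℤ), (θ, x) ∈ U i → (θ, x + m) ∈ U i := fun i θ x m hp => by
    simp only [U, Set.mem_ofPred_eq, CircleDeg1Lift.map_add_int] at hp ⊢
    linarith
  have hcover : ∀ p, ∃ i, p ∈ U i := fun p => by
    obtain ⟨i, hi⟩ := exists_nat_one_div_lt (sub_pos.2 (lt_drift_succ h.lt 0 p.1 p.2))
    exact ⟨i, by simpa [U] using lt_sub_iff_add_lt'.1 hi⟩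
  obtain ⟨i, hi⟩ := exists_eq_univ_of_monotone_of_periodic hmono hopen hper hcover
  exact ⟨1 / (i + 1), Nat.one_div_pos_of_nat, fun θ x =>
    (Set.eq_univ_iff_forall.1 hi (θ, x)).le.trans (h.drift_le 0 1 θ x)⟩

theorem le_pow_apply (h : IsTotalDrift φ ψ S) (j : ℕ) (θ : B) (x : ℝ) : x ≤ (S θ ^ j) x := by
  simpa using add_mul_le_pow_apply (δ := 0) (fun x => by simpa using (h.lt_apply θ x).le) j x

end IsTotalDrift

theorem HasRotationNumber.exists_isTotalDrift [ContinuousAdd B] [CompactSpace B] {ρ σ : ℝ}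
    (hφ : φ.HasRotationNumber ρ) (hψ : ψ.HasRotationNumber σ) (hσρ : σ ≤ ρ)
    (hα : DenseRange fun n : ℤ => n • α) (hlt : ∀ θ x, φ 1 θ x < ψ 1 θ x) :
    ∃ S, IsTotalDrift φ ψ S ∧ ∃ θ x, S θ x ≤ x + 1 := by
  obtain ⟨θ₀, x₀, h₀⟩ := hφ.exists_drift_le hψ hσρ hlt
  have hdrift : ∀ m n, φ.drift ψ m n θ₀ x₀ ≤ x₀ + 1 := fun m n =>
    (drift_le_drift hlt (by omega) (by omega) θ₀ x₀).trans (h₀ (max m.natAbs n.natAbs))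
  obtain ⟨S, hS⟩ := FiberedCocycle.exists_isTotalDrift hlt fun θ x => ⟨x + 2, by
    rintro _ ⟨M, rfl⟩
    exact drift_le_add_two hα hdrift _ _ θ x⟩
  refine ⟨S, hS, θ₀, x₀, (hS.isLUB θ₀ x₀).2 ?_⟩
  rintro _ ⟨M, rfl⟩
  exact h₀ M

end FiberedCocycle

/-! ### Projection along the fibres -/

section Projection

theorem image_fst_inter_Icc {X : Type*} {R : Set (X × ℝ)}
    (hper : ∀ x y (m : ℤ), (x, y) ∈ R → (x, y + m) ∈ R) :
    Prod.fst '' (R ∩ {p | p.2 ∈ Set.Icc (0 : ℝ) 1}) = Prod.fst '' R := by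
  refine (Set.image_mono Set.inter_subset_left).antisymm ?_
  rintro _ ⟨⟨x, y⟩, hp, rfl⟩
  refine ⟨(x, Int.fract y), ⟨?_, Int.fract_nonneg y, (Int.fract_lt_one y).le⟩, rfl⟩
  simpa [← sub_eq_add_neg] using hper x y (-⌊y⌋) hp

variable {X Y : Type*} [TopologicalSpace X] [TopologicalSpace Y] {R : Set (X × ℝ)}

theorem isClosed_image_fst_of_mem_Icc {a : X → ℝ} (ha : Continuous a) (hR : IsClosed R)
    (hIcc : ∀ p ∈ R, p.2 ∈ Set.Icc (a p.1) (a p.1 + 1)) : IsClosed (Prod.fst '' R) := by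
  let T : Set (X × Set.Icc (0 : ℝ) 1) := {p | (p.1, a p.1 + p.2) ∈ R}
  have hT : IsClosed T := hR.preimage (by fun_prop)
  have himage : Prod.fst '' R = Prod.fst '' T := by
    refine Set.Subset.antisymm ?_ ?_
    · rintro _ ⟨⟨x, y⟩, hp, rfl⟩
      obtain ⟨hay, hya⟩ := hIcc _ hp
      refine ⟨(x, ⟨y - a x, by linarith, by linarith⟩), ?_, rfl⟩
      simpa [T] using hp
    · rintro _ ⟨p, hp, rfl⟩
      exact ⟨_, hp, rfl⟩
  rw [himage]
  exact isClosedMap_fst_of_compactSpace _ hT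

theorem continuousOn_image_fst_of_mem_Icc {a : X → ℝ} (ha : Continuous a) (hR : IsClosed R)
    (hIcc : ∀ p ∈ R, p.2 ∈ Set.Icc (a p.1) (a p.1 + 1)) {f : X × ℝ → Y} (hf : ContinuousOn f R)
    {g : X → Y} (hg : ∀ p ∈ R, g p.1 = f p) : ContinuousOn g (Prod.fst '' R) := by
  refine continuousOn_iff_isClosed.2 fun C hC => ⟨Prod.fst '' (R ∩ f ⁻¹' C),
    isClosed_image_fst_of_mem_Icc ha (hf.preimage_isClosed_of_isClosed hR hC)
      fun p hp => hIcc p hp.1, ?_⟩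
  ext x
  constructor
  · rintro ⟨hx, p, hp, rfl⟩
    exact ⟨⟨p, ⟨hp, by rwa [Set.mem_preimage, ← hg p hp]⟩, rfl⟩, p, hp, rfl⟩
  · rintro ⟨⟨p, ⟨hp, hpC⟩, rfl⟩, hx⟩
    exact ⟨by rwa [Set.mem_preimage, hg p hp], hx⟩

theorem continuousOn_image_fst_of_periodic (hR : IsClosed R)
    (hper : ∀ x y (m : ℤ), (x, y) ∈ R → (x, y + m) ∈ R) {f : X × ℝ → Y} (hf : ContinuousOn f R)
    {g : X → Y} (hg : ∀ p ∈ R, g p.1 = f p) : ContinuousOn g (Prod.fst '' R) := by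
  rw [← image_fst_inter_Icc hper]
  exact continuousOn_image_fst_of_mem_Icc (continuous_const (y := 0))
    (hR.inter (isClosed_Icc.preimage continuous_snd)) (fun p hp => by simpa using hp.2)
    (hf.mono Set.inter_subset_left) fun p hp => hg p hp.1

theorem isClosed_image_fst_of_periodic (hR : IsClosed R)
    (hper : ∀ x y (m : ℤ), (x, y) ∈ R → (x, y + m) ∈ R) : IsClosed (Prod.fst '' R) := by
  rw [← image_fst_inter_Icc hper]
  exact isClosed_image_fst_of_mem_Icc (continuous_const (y := 0))
    (hR.inter (isClosed_Icc.preimage continuous_snd)) fun p hp => by simpa using hp.2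

end Projection

/-! ### Maximal chains within one turn -/

section TurnSet

variable {B : Type*} {S : B → CircleDeg1Lift} {N : ℕ} {θ : B} {x : ℝ}

/-- The points from which `N` applications of the fibre maps `S` do not exceed one full turn. -/
def turnSet (S : B → CircleDeg1Lift) (N : ℕ) : Set (B × ℝ) :=
  {p | (S p.1 ^ N) p.2 ≤ p.2 + 1}

theorem mem_turnSet : (θ, x) ∈ turnSet S N ↔ (S θ ^ N) x ≤ x + 1 := Iff.rfl

theorem add_intCast_mem_turnSet (hx : (θ, x) ∈ turnSet S N) (m : ℤ) :
    (θ, x + m) ∈ turnSet S N := by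
  rw [mem_turnSet] at hx ⊢
  linarith [(S θ ^ N).map_add_int x m]

theorem pow_apply_mem_turnSet (hx : (θ, x) ∈ turnSet S N) (j : ℕ) :
    (θ, (S θ ^ j) x) ∈ turnSet S N := by
  rw [mem_turnSet, ← CircleDeg1Lift.mul_apply, (Commute.pow_pow_self (S θ) N j).eq,
    ← CircleDeg1Lift.map_add_one]
  exact (S θ ^ j).mono hx

end TurnSet

namespace FiberedCocycle

variable {B : Type*} [AddCommGroup B] [TopologicalSpace B] {α : B} {φ ψ : FiberedCocycle α}
  {S : B → CircleDeg1Lift} {N : ℕ} {θ : B} {a a' : ℝ}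

theorem IsTotalDrift.map_mem_turnSet (h : IsTotalDrift φ ψ S) {x : ℝ}
    (hx : (θ, x) ∈ turnSet S N) (k : ℤ) : (θ + k • α, φ k θ x) ∈ turnSet S N := by
  rw [mem_turnSet, ← h.map_pow, ← CircleDeg1Lift.map_add_one]
  exact (φ k θ).1.mono hx

theorem IsTotalDrift.isClosed_turnSet (h : IsTotalDrift φ ψ S) (N : ℕ) :
    IsClosed (turnSet S N) :=
  (h.isClosed_setOf_pow_le N).preimage (by fun_prop : Continuous fun p : B × ℝ => (p, p.2 + 1))

/-- `S` is the total drift of `ψ` relative to `φ`, and `N ≥ 1` is the largest number of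
applications of `S` that stay within one full turn somewhere. -/
structure IsTurnCount (φ ψ : FiberedCocycle α) (S : B → CircleDeg1Lift) (N : ℕ) : Prop
    extends IsTotalDrift φ ψ S where
  pos : 0 < N
  nonempty : (turnSet S N).Nonempty
  lt_pow_succ : ∀ θ x, x + 1 < (S θ ^ (N + 1)) x

theorem IsTotalDrift.exists_isTurnCount [CompactSpace B]
    (h : IsTotalDrift φ ψ S) {x : ℝ} (hx : S θ x ≤ x + 1) : ∃ N, IsTurnCount φ ψ S N := by
  classical
  have hex : ∃ n : ℕ, ∀ θ x, x + 1 < (S θ ^ (n + 1)) x := by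
    obtain ⟨δ, hδ, hgap⟩ := h.exists_gap
    obtain ⟨n, hn⟩ := exists_nat_gt δ⁻¹
    refine ⟨n, fun θ x => lt_of_lt_of_le ?_ (add_mul_le_pow_apply (hgap θ) (n + 1) x)⟩
    have hn' : 1 < n * δ := (inv_lt_iff_one_lt_mul₀ hδ).1 hn
    push_cast
    linarith
  have hpos : 0 < Nat.find hex := (Nat.find_pos hex).2 fun h0 =>
    (h0 θ x).not_ge (by simpa using hx)
  refine ⟨Nat.find hex, h, hpos, ?_, Nat.find_spec hex⟩
  have hmin := Nat.find_min hex (Nat.pred_lt hpos.ne')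
  push Not at hmin
  obtain ⟨θ₁, x₁, h₁⟩ := hmin
  exact ⟨(θ₁, x₁), by rwa [Nat.pred_eq_sub_one, Nat.sub_add_cancel hpos] at h₁⟩

namespace IsTurnCount

theorem exists_mem_turnSet [ContinuousAdd B] (h : IsTurnCount φ ψ S N)
    (hα : DenseRange fun n : ℤ => n • α) (θ : B) : ∃ x, (θ, x) ∈ turnSet S N := by
  obtain ⟨⟨θ₀, x₀⟩, h₀⟩ := h.nonempty
  have hclosed := isClosed_image_fst_of_periodic (h.isClosed_turnSet N)
    fun _ _ m hx => add_intCast_mem_turnSet hx m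
  obtain ⟨⟨_, x⟩, hx, rfl⟩ := (denseRange_add_zsmul hα θ₀).induction_on
    (p := (· ∈ Prod.fst '' turnSet S N)) θ hclosed fun k => ⟨_, h.map_mem_turnSet h₀ k, rfl⟩
  exact ⟨x, hx⟩

theorem exists_forall_lt_drift_drift [CompactSpace B]
    (h : IsTurnCount φ ψ S N) : ∃ L : ℕ, ∀ θ a, (θ, a) ∈ turnSet S N → ∀ m : ℤ,
      S θ a < φ.drift ψ m (m + L) θ (φ.drift ψ m (m + L) θ a) := by
  obtain ⟨M, hM⟩ := exists_forall_add_one_lt_drift_pow h.lt fun θ x =>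
    h.exists_lt_drift_pow (N + 1) (h.lt_pow_succ θ x)
  refine ⟨2 * M, fun θ a ha m => ?_⟩
  set d := φ.drift ψ m (m + (2 * M : ℕ)) θ
  have hd : SemiconjBy (φ (m + M) θ) d (φ.drift ψ (-M) M (θ + (m + M) • α)) := by
    have hm : -(M : ℤ) + (m + M) = m := by ring
    have hn : (M : ℤ) + (m + M) = m + (2 * M : ℕ) := by push_cast; ring
    simpa only [hm, hn] using semiconjBy_drift φ ψ (m + M) (-M) M θ
  have hpow : a + 1 < ((d : CircleDeg1Lift) ^ (N + 1)) a := by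
    rw [← (strictMono_units (φ (m + M) θ)).lt_iff_lt, CircleDeg1Lift.map_add_one]
    exact (hM _ _).trans_eq (DFunLike.congr_fun ((hd.units_val.pow_right (N + 1)).symm) a)
  by_contra! hle
  have hN : N + 1 = N - 1 + 2 := by have := h.pos; omega
  refine hpow.not_ge ?_
  calc ((d : CircleDeg1Lift) ^ (N + 1)) a = ((d : CircleDeg1Lift) ^ (N - 1)) (d (d a)) := by
        rw [hN, pow_add, sq]; rfl
    _ ≤ (S θ ^ (N - 1)) (d (d a)) := CircleDeg1Lift.pow_mono (h.drift_le _ _ θ) _ _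
    _ ≤ (S θ ^ (N - 1)) (S θ a) := (S θ ^ (N - 1)).mono hle
    _ = (S θ ^ N) a := by rw [← CircleDeg1Lift.mul_apply, ← pow_succ, Nat.sub_add_cancel h.pos]
    _ ≤ a + 1 := ha

theorem apply_eq_of_mem_turnSet [CompactSpace B] (h : IsTurnCount φ ψ S N)
    (ha : (θ, a) ∈ turnSet S N) (ha' : (θ, a') ∈ turnSet S N) (hle : a ≤ a')
    (hlt : a' < S θ a) : S θ a = S θ a' := by
  obtain ⟨L, hL⟩ := h.exists_forall_lt_drift_drift
  refine ((S θ).mono hle).eq_of_not_lt fun hS => ?_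
  obtain ⟨M₀, hM₀⟩ := h.exists_lt_drift hS
  obtain ⟨M₁, hM₁⟩ := h.exists_lt_drift hlt
  set n := min (-M₀ : ℤ) M₁
  by_cases hfar : ∃ m, S θ a < φ.drift ψ m n θ a'
  · obtain ⟨m, hm⟩ := hfar
    have hfar' := hm.trans_le (drift_le_drift h.lt le_rfl (min_le_right (-M₀ : ℤ) M₁) θ a')
    have hda' := (drift_lt_drift_of_lt hM₁ (M₁ + L)).le.trans (h.drift_le _ _ θ a)
    have hdS := (drift_lt_drift_of_lt hfar' (M₁ + L)).le.trans (h.drift_le _ _ θ a')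
    exact (hL θ a' ha' M₁).not_ge (((φ.drift ψ _ _ θ).1.mono hda').trans hdS)
  · push Not at hfar
    have hda : φ.drift ψ (n - L) n θ a ≤ a' := by
      by_contra! hgt
      have hgt' := hgt.trans_le (drift_le_drift h.lt le_rfl (min_le_left (-M₀ : ℤ) M₁) θ a)
      exact hM₀.not_ge ((drift_lt_drift_of_lt hgt' M₀).le.trans (h.drift_le _ _ θ a))
    have hd := hL θ a ha (n - L)
    rw [sub_add_cancel] at hd
    exact hd.not_ge (((φ.drift ψ _ _ θ).1.mono hda).trans (hfar _))

theorem apply_pow_apply [CompactSpace B] (h : IsTurnCount φ ψ S N)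
    (ha : (θ, a) ∈ turnSet S N) : S θ ((S θ ^ N) a) = S θ (a + 1) := by
  refine h.apply_eq_of_mem_turnSet (pow_apply_mem_turnSet ha N)
    (by simpa using add_intCast_mem_turnSet ha 1) ha ?_
  rw [← CircleDeg1Lift.mul_apply, ← pow_succ']
  exact h.lt_pow_succ θ a

theorem mem_turnSet_of_mem_Icc (h : IsTurnCount φ ψ S N) (ha : (θ, a) ∈ turnSet S N)
    (heq : S θ a = S θ a') {x : ℝ} (hx : x ∈ Set.Icc a a') : (θ, x) ∈ turnSet S N := by
  have hSx : S θ x = S θ a := ((S θ).mono hx.2).trans_eq heq.symm |>.antisymm ((S θ).mono hx.1)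
  have hN : (S θ ^ N) x = (S θ ^ N) a := by
    rw [← Nat.sub_add_cancel h.pos, pow_succ, CircleDeg1Lift.mul_apply, hSx]; rfl
  rw [mem_turnSet, hN]
  exact (mem_turnSet.1 ha).trans (by linarith [hx.1])

theorem exists_notMem_turnSet [CompactSpace B] (h : IsTurnCount φ ψ S N)
    (θ : B) : ∃ x, (θ, x) ∉ turnSet S N := by
  by_contra! hall
  obtain ⟨δ, hδ, hgap⟩ := h.exists_gap
  have heq := h.apply_eq_of_mem_turnSet (hall 0) (hall (S θ 0 - δ / 2))
    (by linarith [hgap θ 0]) (by linarith)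
  linarith [hgap θ (S θ 0 - δ / 2)]

end IsTurnCount

end FiberedCocycle

/-! ### Collapsing coordinates -/

section Collapsing

theorem intervalIntegral_pos_of_periodic {f : ℝ → ℝ} (hf : Continuous f)
    (hper : Function.Periodic f 1) (hf₀ : ∀ x, 0 ≤ f x) {x : ℝ} (hx : f x ≠ 0) :
    0 < ∫ t in (0 : ℝ)..1, f t := by
  have hshift := hper.intervalIntegral_add_eq 0 x
  rw [zero_add] at hshift
  rw [hshift]
  exact intervalIntegral.integral_pos (lt_add_one x) hf.continuousOn (fun t _ => hf₀ t)
    ⟨x, ⟨le_rfl, (lt_add_one x).le⟩, (hf₀ x).lt_of_ne' hx⟩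

theorem intervalIntegral_div_add_one {f : ℝ → ℝ} (hf : Continuous f)
    (hper : Function.Periodic f 1) (hpos : 0 < ∫ t in (0 : ℝ)..1, f t) (x : ℝ) :
    (∫ t in (0 : ℝ)..(x + 1), f t) / (∫ t in (0 : ℝ)..1, f t) =
      (∫ t in (0 : ℝ)..x, f t) / (∫ t in (0 : ℝ)..1, f t) + 1 := by
  have hshift := hper.intervalIntegral_add_eq 0 x
  rw [zero_add] at hshift
  rw [← intervalIntegral.integral_add_adjacent_intervals (hf.intervalIntegrable 0 x)
    (hf.intervalIntegrable x (x + 1)), ← hshift, add_div, div_self hpos.ne']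

theorem intervalIntegral_mono_right {f : ℝ → ℝ} (hf : Continuous f) (hf₀ : ∀ x, 0 ≤ f x) :
    Monotone fun x => ∫ t in (0 : ℝ)..x, f t := fun x y hxy => by
  have hsplit := intervalIntegral.integral_add_adjacent_intervals
    (hf.intervalIntegrable 0 x) (hf.intervalIntegrable (μ := volume) x y)
  linarith [intervalIntegral.integral_nonneg_of_forall (μ := volume) hxy hf₀]

/-- `h` is a jointly continuous family of degree-one coordinates on the fibres which collapses
every interval contained in a fibre of `Q` to a point. -/
structure IsCollapsing {B : Type*} [TopologicalSpace B] (Q : Set (B × ℝ))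
    (h : B → CircleDeg1Lift) : Prop where
  continuous : Continuous fun p : B × ℝ => h p.1 p.2
  map_zero : ∀ θ, h θ 0 = 0
  apply_eq : ∀ θ x y, x ≤ y → (∀ t ∈ Set.Icc x y, (θ, t) ∈ Q) → h θ x = h θ y

theorem IsCollapsing.abs_sub_le {B : Type*} [TopologicalSpace B] {Q : Set (B × ℝ)}
    {h : B → CircleDeg1Lift} (hQ : IsCollapsing Q h) (θ : B) (x : ℝ) : |h θ x - x| ≤ 1 := by
  have hle := (h θ).map_le_of_map_zero x
  have hge := (h θ).le_map_of_map_zero x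
  rw [hQ.map_zero] at hle hge
  rw [abs_le]
  constructor <;> linarith [Int.lt_floor_add_one x, Int.ceil_lt_add_one x]

theorem exists_isCollapsing_zeros {B : Type*} [TopologicalSpace B] {f : B → ℝ → ℝ}
    (hf : Continuous fun p : B × ℝ => f p.1 p.2) (hper : ∀ θ, Function.Periodic (f θ) 1)
    (hf₀ : ∀ θ x, 0 ≤ f θ x) (hne : ∀ θ, ∃ x, f θ x ≠ 0) :
    ∃ h, IsCollapsing {p : B × ℝ | f p.1 p.2 = 0} h := by
  have hfθ : ∀ θ, Continuous (f θ) := fun θ => hf.comp (Continuous.prodMk_right θ)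
  have hmass : ∀ θ, 0 < ∫ t in (0 : ℝ)..1, f θ t := fun θ =>
    (hne θ).elim fun _ => intervalIntegral_pos_of_periodic (hfθ θ) (hper θ) (hf₀ θ)
  let h : B → CircleDeg1Lift := fun θ =>
    { toFun := fun x => (∫ t in (0 : ℝ)..x, f θ t) / ∫ t in (0 : ℝ)..1, f θ t
      monotone' := (intervalIntegral_mono_right (hfθ θ) (hf₀ θ)).div_const (hmass θ).le
      map_add_one' := intervalIntegral_div_add_one (hfθ θ) (hper θ) (hmass θ) }
  refine ⟨h, ?_, fun θ => by simp [h], fun θ x y hxy hzero => ?_⟩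
  · have hf' : Continuous fun q : (B × ℝ) × ℝ => f q.1.1 q.2 :=
      hf.comp (by fun_prop : Continuous fun q : (B × ℝ) × ℝ => (q.1.1, q.2))
    exact (intervalIntegral.continuous_parametric_intervalIntegral_of_continuous hf'
      continuous_snd).div (intervalIntegral.continuous_parametric_intervalIntegral_of_continuous
        hf' continuous_const) fun p => (hmass p.1).ne'
  · have hxy₀ : ∫ t in x..y, f θ t = 0 := by
      rw [intervalIntegral.integral_congr (g := fun _ => 0) fun t ht =>
        hzero t (by rwa [Set.uIcc_of_le hxy] at ht), intervalIntegral.integral_zero]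
    change (∫ t in (0 : ℝ)..x, f θ t) / _ = (∫ t in (0 : ℝ)..y, f θ t) / _
    rw [← intervalIntegral.integral_add_adjacent_intervals ((hfθ θ).intervalIntegrable 0 x)
      ((hfθ θ).intervalIntegrable x y), hxy₀, add_zero]

theorem periodic_infDist {B : Type*} [PseudoMetricSpace B] {Q : Set (B × ℝ)}
    (hper : ∀ θ x (m : ℤ), (θ, x) ∈ Q → (θ, x + m) ∈ Q) (θ : B) :
    Function.Periodic (fun x => Metric.infDist (θ, x) Q) 1 := fun x => by
  have hisom : Isometry fun p : B × ℝ => (p.1, p.2 + 1) :=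
    Isometry.of_dist_eq fun p q => by simp [Prod.dist_eq]
  have himage : (fun p : B × ℝ => (p.1, p.2 + 1)) '' Q = Q := by
    refine Set.Subset.antisymm ?_ fun p hp => ⟨(p.1, p.2 - 1), ?_, by simp⟩
    · rintro _ ⟨p, hp, rfl⟩
      simpa using hper p.1 p.2 1 hp
    · simpa [← sub_eq_add_neg] using hper p.1 p.2 (-1) hp
  have hdist := Metric.infDist_image hisom (x := (θ, x)) (t := Q)
  rwa [himage] at hdist

theorem exists_isCollapsing {B : Type*} [PseudoMetricSpace B] {Q : Set (B × ℝ)} (hQ : IsClosed Q)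
    (hQ₀ : Q.Nonempty) (hper : ∀ θ x (m : ℤ), (θ, x) ∈ Q → (θ, x + m) ∈ Q)
    (hne : ∀ θ, ∃ x, (θ, x) ∉ Q) : ∃ h, IsCollapsing Q h := by
  have hzeros : {p : B × ℝ | Metric.infDist (p.1, p.2) Q = 0} = Q :=
    Set.ext fun p => (hQ.mem_iff_infDist_zero hQ₀).symm
  have hcoord := exists_isCollapsing_zeros (f := fun θ x => Metric.infDist (θ, x) Q)
    (Metric.continuous_infDist_pt Q) (periodic_infDist hper) (fun _ _ => Metric.infDist_nonneg)
    fun θ => (hne θ).imp fun x hx => mt (hQ.mem_iff_infDist_zero hQ₀).2 hx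
  rwa [hzeros] at hcoord

end Collapsing

/-! ### Chain sums -/

section ChainSum

variable {B : Type*} {h S : B → CircleDeg1Lift}

/-- The sum of the coordinates `h` along the chain `x, S x, …, S^(N-1) x` in the fibre over `θ`. -/
def chainSum (h S : B → CircleDeg1Lift) (N : ℕ) (θ : B) (x : ℝ) : ℝ :=
  ∑ i ∈ Finset.range N, h θ ((S θ ^ i) x)

theorem chainSum_add_intCast (h S : B → CircleDeg1Lift) (N : ℕ) (θ : B) (x : ℝ) (m : ℤ) :
    chainSum h S N θ (x + m) = chainSum h S N θ x + (N * m : ℤ) := by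
  simp [chainSum, CircleDeg1Lift.map_add_int, Finset.sum_add_distrib]

end ChainSum

namespace FiberedCocycle.IsTurnCount

variable {B : Type*} [AddCommGroup B] [TopologicalSpace B] {α : B} {φ ψ : FiberedCocycle α}
  {h S : B → CircleDeg1Lift} {N : ℕ} {θ : B} {a a' : ℝ}

theorem pow_apply_le_add_one (H : IsTurnCount φ ψ S N) (ha : (θ, a) ∈ turnSet S N) {i : ℕ}
    (hi : i ≤ N) : (S θ ^ i) a ≤ a + 1 := by
  refine (H.le_pow_apply (N - i) θ _).trans ?_
  rwa [← CircleDeg1Lift.mul_apply, ← pow_add, Nat.sub_add_cancel hi]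

theorem abs_chainSum_sub_le (H : IsTurnCount φ ψ S N) (hh : IsCollapsing (turnSet S N) h)
    (ha : (θ, a) ∈ turnSet S N) : |chainSum h S N θ a - N * a| ≤ 2 * N := by
  have hterm : ∀ i ∈ Finset.range N, |h θ ((S θ ^ i) a) - a| ≤ 2 := fun i hi => by
    have hcoord := abs_le.1 (hh.abs_sub_le θ ((S θ ^ i) a))
    have hle := H.pow_apply_le_add_one ha (Finset.mem_range.1 hi).le
    have hge := H.le_pow_apply i θ a
    exact abs_le.2 ⟨by linarith [hcoord.1], by linarith [hcoord.2]⟩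
  calc |chainSum h S N θ a - N * a| = |∑ i ∈ Finset.range N, (h θ ((S θ ^ i) a) - a)| := by
        simp [chainSum]
    _ ≤ ∑ i ∈ Finset.range N, |h θ ((S θ ^ i) a) - a| := Finset.abs_sum_le_sum_abs _ _
    _ ≤ ∑ _i ∈ Finset.range N, 2 := Finset.sum_le_sum hterm
    _ = 2 * N := by simp [mul_comm]

theorem coord_eq (H : IsTurnCount φ ψ S N) (hh : IsCollapsing (turnSet S N) h)
    (ha : (θ, a) ∈ turnSet S N) (hle : a ≤ a') (heq : S θ a = S θ a') : h θ a = h θ a' :=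
  hh.apply_eq θ a a' hle fun _ => H.mem_turnSet_of_mem_Icc ha heq

theorem chainSum_eq (H : IsTurnCount φ ψ S N) (hh : IsCollapsing (turnSet S N) h)
    (ha : (θ, a) ∈ turnSet S N) (hle : a ≤ a') (heq : S θ a = S θ a') :
    chainSum h S N θ a = chainSum h S N θ a' := by
  refine Finset.sum_congr rfl fun i _ => ?_
  cases i with
  | zero => exact H.coord_eq hh ha hle heq
  | succ i => simp only [pow_succ, CircleDeg1Lift.mul_apply, heq]

variable [CompactSpace B]

theorem chainSum_pow_apply (H : IsTurnCount φ ψ S N) (hh : IsCollapsing (turnSet S N) h)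
    (ha : (θ, a) ∈ turnSet S N) (k : ℕ) :
    chainSum h S N θ ((S θ ^ k) a) = chainSum h S N θ a + k := by
  induction k with
  | zero => simp
  | succ k ih =>
    set c := (S θ ^ k) a
    have hc : (θ, c) ∈ turnSet S N := pow_apply_mem_turnSet ha k
    have hlast : h θ ((S θ ^ N) c) = h θ c + 1 := by
      rw [← CircleDeg1Lift.map_add_one]
      exact H.coord_eq hh (pow_apply_mem_turnSet hc N) hc (H.apply_pow_apply hc)
    have hsucc : chainSum h S N θ (S θ c) + h θ c = chainSum h S N θ c + h θ ((S θ ^ N) c) :=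
      (Finset.sum_range_succ' (fun i => h θ ((S θ ^ i) c)) N).symm.trans
        (Finset.sum_range_succ (fun i => h θ ((S θ ^ i) c)) N)
    rw [pow_succ', CircleDeg1Lift.mul_apply]
    push_cast
    linarith

theorem exists_pow_apply_add_intCast (H : IsTurnCount φ ψ S N) (ha : (θ, a) ∈ turnSet S N)
    (ha' : (θ, a') ∈ turnSet S N) : ∃ (j : ℕ) (m : ℤ),
      (S θ ^ j) a + m ≤ a' ∧ S θ ((S θ ^ j) a + m) = S θ a' := by
  classical
  obtain ⟨δ, hδ, hgap⟩ := H.exists_gap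
  obtain ⟨m, hm⟩ := exists_int_lt (a' - a)
  have hex : ∃ j : ℕ, a' < (S θ ^ (j + 1)) a + m := by
    obtain ⟨n, hn⟩ := exists_nat_gt ((a' - a - m) / δ)
    rw [div_lt_iff₀ hδ] at hn
    have hpow := add_mul_le_pow_apply (hgap θ) (n + 1) a
    push_cast at hpow
    exact ⟨n, by linarith⟩
  have hspec := Nat.find_spec hex
  have hle : (S θ ^ Nat.find hex) a + m ≤ a' := by
    rcases hj : Nat.find hex with _ | j
    · simpa using (lt_sub_iff_add_lt'.1 hm).le
    · exact not_lt.1 (Nat.find_min hex (hj ▸ Nat.lt_succ_self j))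
  refine ⟨Nat.find hex, m, hle, H.apply_eq_of_mem_turnSet
    (add_intCast_mem_turnSet (pow_apply_mem_turnSet ha _) m) ha' hle ?_⟩
  rwa [CircleDeg1Lift.map_add_int, ← CircleDeg1Lift.mul_apply, ← pow_succ']

theorem exists_chainSum_eq_add_intCast (H : IsTurnCount φ ψ S N)
    (hh : IsCollapsing (turnSet S N) h) (ha : (θ, a) ∈ turnSet S N)
    (ha' : (θ, a') ∈ turnSet S N) : ∃ j : ℤ, ∀ k : ℤ,
      chainSum h S N (θ + k • α) (φ k θ a') = chainSum h S N (θ + k • α) (φ k θ a) + j := by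
  obtain ⟨j, m, hle, heq⟩ := H.exists_pow_apply_add_intCast ha ha'
  refine ⟨j + N * m, fun k => ?_⟩
  have hS : ∀ x, S (θ + k • α) (φ k θ x) = φ k θ (S θ x) := fun x =>
    (DFunLike.congr_fun (H.semiconjBy k θ) x).symm
  rw [← H.chainSum_eq hh (H.map_mem_turnSet
      (add_intCast_mem_turnSet (pow_apply_mem_turnSet ha j) m) k)
      ((φ k θ).1.mono hle) (by rw [hS, hS, heq]),
    CircleDeg1Lift.map_add_int, H.map_pow, chainSum_add_intCast,
    H.chainSum_pow_apply hh (H.map_mem_turnSet ha k)]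
  push_cast
  ring

theorem coord_pow_eq (H : IsTurnCount φ ψ S N) (hh : IsCollapsing (turnSet S N) h)
    (ha : (θ, a) ∈ turnSet S N) {i : ℕ} (hi : i ≤ N) (hle : (S θ ^ i) a ≤ a')
    (hle' : (S θ ^ (N - i)) a' ≤ a + 1) : h θ ((S θ ^ i) a) = h θ a' := by
  have hmem : (θ, a') ∈ turnSet S N := by
    have hmono := (S θ ^ i).mono hle'
    rw [← CircleDeg1Lift.mul_apply, ← pow_add, Nat.add_sub_cancel' hi,
      CircleDeg1Lift.map_add_one] at hmono
    exact mem_turnSet.2 (hmono.trans (by linarith))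
  have hlt : a' < S θ ((S θ ^ i) a) := by
    by_contra! hge
    have hmono := (S θ ^ (N - i)).mono hge
    rw [← CircleDeg1Lift.mul_apply, ← CircleDeg1Lift.mul_apply, mul_assoc, ← pow_succ',
      ← pow_add, show N - i + (i + 1) = N + 1 by omega] at hmono
    exact (H.lt_pow_succ θ a).not_ge (hmono.trans hle')
  have hmem_pow := pow_apply_mem_turnSet ha i
  exact H.coord_eq hh hmem_pow hle (H.apply_eq_of_mem_turnSet hmem_pow hmem hle hlt)

theorem continuousOn_coord_pow (H : IsTurnCount φ ψ S N) (hh : IsCollapsing (turnSet S N) h)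
    {i : ℕ} (hi : i ≤ N) :
    ContinuousOn (fun p : B × ℝ => h p.1 ((S p.1 ^ i) p.2)) (turnSet S N) := by
  -- `S` itself is only semicontinuous; but `h` cannot tell `S^i x` from the other points `y` of
  -- the closed relation `R`, so the map in question is a continuous image of `R`.
  let R : Set ((B × ℝ) × ℝ) := {p | p.1 ∈ turnSet S N ∧
    (S p.1.1 ^ i) p.1.2 ≤ p.2 ∧ (S p.1.1 ^ (N - i)) p.2 ≤ p.1.2 + 1}
  have hR : IsClosed R := ((H.isClosed_turnSet N).preimage continuous_fst).inter
    ((H.isClosed_setOf_pow_le i).inter ((H.isClosed_setOf_pow_le (N - i)).preimage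
      (by fun_prop : Continuous fun p : (B × ℝ) × ℝ => ((p.1.1, p.2), p.1.2 + 1))))
  have himage : Prod.fst '' R = turnSet S N := by
    refine Set.Subset.antisymm (Set.image_subset_iff.2 fun _ hp => hp.1) fun p hp => ?_
    refine ⟨(p, (S p.1 ^ i) p.2), ⟨hp, le_rfl, ?_⟩, rfl⟩
    rwa [← CircleDeg1Lift.mul_apply, ← pow_add, Nat.sub_add_cancel hi]
  rw [← himage]
  refine continuousOn_image_fst_of_mem_Icc continuous_snd hR (fun p hp => ?_)
    (f := fun p => h p.1.1 p.2) ?_ fun p hp => H.coord_pow_eq hh hp.1 hi hp.2.1 hp.2.2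
  · exact ⟨(H.le_pow_apply i _ _).trans hp.2.1, (H.le_pow_apply (N - i) _ _).trans hp.2.2⟩
  · exact (hh.continuous.comp
      (by fun_prop : Continuous fun p : (B × ℝ) × ℝ => (p.1.1, p.2))).continuousOn

theorem continuousOn_chainSum (H : IsTurnCount φ ψ S N) (hh : IsCollapsing (turnSet S N) h) :
    ContinuousOn (fun p : B × ℝ => chainSum h S N p.1 p.2) (turnSet S N) :=
  continuousOn_finsetSum _ fun _ hi =>
    H.continuousOn_coord_pow hh (Finset.mem_range.1 hi).le

theorem continuousOn_chainSum_map [ContinuousAdd B] (H : IsTurnCount φ ψ S N)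
    (hh : IsCollapsing (turnSet S N) h) (k : ℤ) :
    ContinuousOn (fun p : B × ℝ => chainSum h S N (p.1 + k • α) (φ k p.1 p.2))
      (turnSet S N) :=
  (H.continuousOn_chainSum hh).comp
    ((by fun_prop : Continuous fun p : B × ℝ => p.1 + k • α).prodMk (φ.continuous k)).continuousOn
    fun _ hp => H.map_mem_turnSet hp k

end FiberedCocycle.IsTurnCount

/-! ### Means of coboundaries modulo one -/

section Averages

theorem tendsto_div_natCast_of_abs_sub_le {u v : ℕ → ℝ} {l C : ℝ}
    (hu : Tendsto (fun n : ℕ => u n / n) atTop (𝓝 l)) (h : ∀ n, |v n - u n| ≤ C) :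
    Tendsto (fun n : ℕ => v n / n) atTop (𝓝 l) := by
  have hsub : Tendsto (fun n : ℕ => (v n - u n) / n) atTop (𝓝 0) := by
    refine squeeze_zero_norm (fun n => ?_) (tendsto_const_div_atTop_nhds_zero_nat C)
    rw [Real.norm_eq_abs, abs_div, Nat.abs_cast]
    exact div_le_div_of_nonneg_right (h n) n.cast_nonneg
  simpa [sub_div] using hsub.add hu

theorem exists_forall_eq_intCast {X : Type*} [TopologicalSpace X] [PreconnectedSpace X]
    [Nonempty X] {w : X → ℝ} (hw : Continuous w) (h : ∀ x, (w x : T1) = 0) :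
    ∃ q : ℤ, ∀ x, w x = q := by
  have hint : ∀ x, ∃ z : ℤ, (z : ℝ) = w x := fun x => by
    simpa using (AddCircle.coe_eq_zero_iff (1 : ℝ)).1 (h x)
  choose z hz using hint
  have hzcont : Continuous z := by
    rw [Int.isClosedEmbedding_coe_real.isEmbedding.continuous_iff]
    exact hw.congr fun x => (hz x).symm
  obtain ⟨x₀⟩ := ‹Nonempty X›
  exact ⟨z x₀, fun x => by rw [← hz x, PreconnectedSpace.constant ‹_› hzcont (y := x₀)]⟩

theorem exists_continuous_lift {G : T1 → T1} (hG : Continuous G) :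
    ∃ (g : ℝ → ℝ) (p : ℤ), Continuous g ∧ (∀ t : ℝ, (g t : T1) = G t) ∧
      ∀ t, g (t + 1) = g t + p := by
  obtain ⟨g₀, hg₀⟩ := QuotientAddGroup.mk_surjective (G 0)
  obtain ⟨g, ⟨-, hg⟩, -⟩ := (AddCircle.isCoveringMap_coe (1 : ℝ)).existsUnique_continuousMap_lifts
    (⟨fun t : ℝ => G t, hG.comp (AddCircle.continuous_mk' 1)⟩ : C(ℝ, T1)) 0 g₀ hg₀
  replace hg : ∀ t : ℝ, (g t : T1) = G t := congrFun hg
  obtain ⟨p, hp⟩ := exists_forall_eq_intCast (w := fun t => g (t + 1) - g t) (by fun_prop)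
    fun t => by rw [AddCircle.coe_sub, hg, hg, AddCircle.coe_add_period, sub_self]
  exact ⟨g, p, g.continuous, hg, fun t => eq_add_of_sub_eq' (hp t)⟩

theorem exists_abs_sub_mul_le {g : ℝ → ℝ} {p : ℝ} (hg : Continuous g)
    (hper : ∀ t, g (t + 1) = g t + p) : ∃ M, ∀ t, |g t - p * t| ≤ M := by
  have hperiodic : Function.Periodic (fun t => g t - p * t) 1 := fun t => by
    simp only [hper]; ring
  obtain ⟨M, hM⟩ :=
    (hperiodic.isBounded_of_continuous one_ne_zero (by fun_prop)).exists_norm_le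
  exact ⟨M, fun t => hM _ ⟨t, rfl⟩⟩

theorem exists_tendsto_average_of_coe_eq_sub {ω : ℝ} {G : T1 → T1} {D : T1 → ℝ}
    (hG : Continuous G) (hD : Continuous D) (h : ∀ θ, (D θ : T1) = G (θ + (ω : T1)) - G θ) :
    ∃ p q : ℤ, Tendsto (fun n : ℕ => (∑ k ∈ Finset.range n, D (k • (ω : T1))) / n) atTop
      (𝓝 (q + p * ω)) := by
  obtain ⟨g, p, hg, hlift, hper⟩ := exists_continuous_lift hG
  obtain ⟨M, hM⟩ := exists_abs_sub_mul_le hg hper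
  obtain ⟨q, hq⟩ := exists_forall_eq_intCast (w := fun t : ℝ => D t - (g (t + ω) - g t))
    ((hD.comp (AddCircle.continuous_mk' 1)).sub (by fun_prop)) fun t => by
      rw [AddCircle.coe_sub, AddCircle.coe_sub, hlift, hlift, h, AddCircle.coe_add, sub_self]
  have hsum : ∀ n : ℕ, ∑ k ∈ Finset.range n, D (k • (ω : T1)) = n * q + (g (n * ω) - g 0) :=
    fun n => by
      induction n with
      | zero => simp
      | succ n ih =>
        have hn := hq (n * ω)
        rw [← nsmul_eq_mul, AddCircle.coe_nsmul, nsmul_eq_mul] at hn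
        rw [Finset.sum_range_succ, ih]
        push_cast
        rw [add_one_mul (n : ℝ) ω]
        linarith
  refine ⟨p, q, tendsto_div_natCast_of_abs_sub_le (u := fun n => n * (q + p * ω))
    (C := M + |g 0|) ?_ fun n => ?_⟩
  · refine tendsto_const_nhds.congr' ?_
    filter_upwards [eventually_ne_atTop 0] with n hn
    field_simp
  · calc _ = |(g (n * ω) - p * (n * ω)) - g 0| := by rw [hsum]; ring_nf
      _ ≤ M + |g 0| := (abs_sub _ _).trans (by gcongr; exact hM _)

end Averages

namespace FiberedCocycle.IsTurnCount

variable {B : Type*} [AddCommGroup B] [TopologicalSpace B] {α : B} {φ ψ : FiberedCocycle α}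
  {h S : B → CircleDeg1Lift} {N : ℕ} {θ : B} {a a' : ℝ}

theorem tendsto_chainSum_div (H : IsTurnCount φ ψ S N) (hh : IsCollapsing (turnSet S N) h)
    {ρ : ℝ} (ha : (θ, a) ∈ turnSet S N) (hρ : φ.HasRotationNumber ρ) :
    Tendsto (fun n : ℕ => (chainSum h S N (θ + (n : ℤ) • α) (φ n θ a) - chainSum h S N θ a) / n)
      atTop (𝓝 (N * ρ)) := by
  refine tendsto_div_natCast_of_abs_sub_le (u := fun n => N * (φ n θ a - a)) (C := 4 * N)
    (by simpa only [mul_div_assoc] using (hρ θ a).const_mul (N : ℝ)) fun n => ?_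
  have hn := abs_le.1 (H.abs_chainSum_sub_le hh (H.map_mem_turnSet ha n))
  have h₀ := abs_le.1 (H.abs_chainSum_sub_le hh ha)
  exact abs_le.2 ⟨by linarith [hn.1, h₀.2], by linarith [hn.2, h₀.1]⟩

theorem continuous_of_eq_on_turnSet [ContinuousAdd B] {Y : Type*} [TopologicalSpace Y]
    (H : IsTurnCount φ ψ S N) (hα : DenseRange fun n : ℤ => n • α) {f : B × ℝ → Y}
    (hf : ContinuousOn f (turnSet S N)) {g : B → Y} (hg : ∀ p ∈ turnSet S N, g p.1 = f p) :
    Continuous g := by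
  have himage : Prod.fst '' turnSet S N = Set.univ := Set.eq_univ_of_forall fun θ =>
    let ⟨x, hx⟩ := H.exists_mem_turnSet hα θ
    ⟨(θ, x), hx, rfl⟩
  rw [← continuousOn_univ, ← himage]
  exact continuousOn_image_fst_of_periodic (H.isClosed_turnSet N)
    (fun _ _ m hx => add_intCast_mem_turnSet hx m) hf hg

variable [CompactSpace B]

theorem coe_chainSum_eq (H : IsTurnCount φ ψ S N) (hh : IsCollapsing (turnSet S N) h)
    (ha : (θ, a) ∈ turnSet S N) (ha' : (θ, a') ∈ turnSet S N) :
    (chainSum h S N θ a : T1) = chainSum h S N θ a' := by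
  obtain ⟨j, hj⟩ := H.exists_chainSum_eq_add_intCast hh ha' ha
  simpa [map_zero] using congrArg ((↑) : ℝ → T1) (hj 0)

theorem chainSum_map_sub_eq (H : IsTurnCount φ ψ S N) (hh : IsCollapsing (turnSet S N) h)
    (ha : (θ, a) ∈ turnSet S N) (ha' : (θ, a') ∈ turnSet S N) (k : ℤ) :
    chainSum h S N (θ + k • α) (φ k θ a) - chainSum h S N θ a =
      chainSum h S N (θ + k • α) (φ k θ a') - chainSum h S N θ a' := by
  obtain ⟨j, hj⟩ := H.exists_chainSum_eq_add_intCast hh ha' ha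
  have h₀ : chainSum h S N θ a = chainSum h S N θ a' + j := by simpa [map_zero] using hj 0
  rw [hj k, h₀, add_sub_add_right_eq_sub]

theorem exists_transfer [ContinuousAdd B] (H : IsTurnCount φ ψ S N)
    (hh : IsCollapsing (turnSet S N) h) (hα : DenseRange fun n : ℤ => n • α) :
    ∃ (G : B → T1) (D : B → ℝ), Continuous G ∧ Continuous D ∧
      (∀ θ, (D θ : T1) = G (θ + α) - G θ) ∧ ∀ ρ, φ.HasRotationNumber ρ →
        Tendsto (fun n : ℕ => (∑ k ∈ Finset.range n, D (k • α)) / n) atTop (𝓝 (N * ρ)) := by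
  choose b hb using H.exists_mem_turnSet hα
  let D : B → ℝ := fun θ =>
    chainSum h S N (θ + (1 : ℤ) • α) (φ 1 θ (b θ)) - chainSum h S N θ (b θ)
  refine ⟨fun θ => chainSum h S N θ (b θ), D,
    H.continuous_of_eq_on_turnSet hα
      ((AddCircle.continuous_mk' 1).comp_continuousOn (H.continuousOn_chainSum hh))
      fun p hp => H.coe_chainSum_eq hh (hb p.1) hp,
    H.continuous_of_eq_on_turnSet hα
      ((H.continuousOn_chainSum_map hh 1).sub (H.continuousOn_chainSum hh))
      fun p hp => H.chainSum_map_sub_eq hh (hb p.1) hp 1,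
    fun θ => ?_, fun ρ hρ => ?_⟩
  · rw [AddCircle.coe_sub, H.coe_chainSum_eq hh (H.map_mem_turnSet (hb θ) 1) (hb _), one_smul]
  · have horbit : ∀ k : ℕ, (k • α, φ k 0 (b 0)) ∈ turnSet S N := fun k => by
      simpa using H.map_mem_turnSet (hb 0) k
    have hstep : ∀ k : ℕ, D (k • α) = chainSum h S N ((k + 1) • α) (φ (k + 1 : ℕ) 0 (b 0)) -
        chainSum h S N (k • α) (φ k 0 (b 0)) := fun k => by
      rw [Nat.cast_succ, add_comm (k : ℤ) 1, map_add_apply, zero_add, succ_nsmul, natCast_zsmul]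
      simpa [D] using H.chainSum_map_sub_eq hh (hb _) (horbit k) 1
    simp only [hstep, Finset.sum_range_sub fun k : ℕ => chainSum h S N (k • α) (φ k 0 (b 0))]
    simpa [map_zero] using H.tendsto_chainSum_div hh (hb 0) hρ

end FiberedCocycle.IsTurnCount

/-! ### Rational dependence -/

theorem FiberedCocycle.HasRotationNumber.exists_mul_eq {ω ρ σ : ℝ}
    {φ ψ : FiberedCocycle (ω : T1)} (hω : Irrational ω) (hφ : φ.HasRotationNumber ρ)
    (hψ : ψ.HasRotationNumber σ) (hσρ : σ ≤ ρ) (hlt : ∀ θ x, φ 1 θ x < ψ 1 θ x) :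
    ∃ (N : ℕ) (p q : ℤ), 0 < N ∧ N * ρ = q + p * ω := by
  have hα : DenseRange fun n : ℤ => n • (ω : T1) :=
    AddCircle.denseRange_zsmul_coe_iff.2 (by simpa using hω)
  obtain ⟨S, hS, θ, x, hx⟩ := hφ.exists_isTotalDrift hψ hσρ hα hlt
  obtain ⟨N, hN⟩ := hS.exists_isTurnCount hx
  obtain ⟨h, hh⟩ := exists_isCollapsing (hN.isClosed_turnSet N) hN.nonempty
    (fun _ _ m hx => add_intCast_mem_turnSet hx m) hN.exists_notMem_turnSet
  obtain ⟨G, D, hG, hD, hGD, hlim⟩ := hN.exists_transfer hh hα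
  obtain ⟨p, q, hpq⟩ := exists_tendsto_average_of_coe_eq_sub hG hD hGD
  exact ⟨N, p, q, hN.pos, tendsto_nhds_unique (hlim ρ hφ) hpq⟩

section Lifts

variable {ω ρ σ : ℝ} {F G : T1 → ℝ → ℝ}

theorem IsQpfLift.add_const (hF : IsQpfLift ω F) (c : ℝ) : IsQpfLift ω fun θ x => F θ x + c where
  cont := hF.cont.add_const c
  mono θ _ _ hxy := by simpa using hF.mono θ hxy
  surj θ := (Equiv.addRight c).surjective.comp (hF.surj θ)
  per θ x := by rw [hF.per]; ring

theorem IsQpfLift.exists_cocycle (hF : IsQpfLift ω F) :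
    ∃ φ : FiberedCocycle (ω : T1), ∀ θ x, φ 1 θ x = F θ x := by
  have hunit : ∀ θ, ∃ u : CircleDeg1Liftˣ, ∀ x, u x = F θ x := fun θ => by
    let f : CircleDeg1Lift := ⟨⟨F θ, (hF.mono θ).monotone⟩, hF.per θ⟩
    obtain ⟨u, hu⟩ := CircleDeg1Lift.isUnit_iff_bijective.2
      (show Function.Bijective f from ⟨(hF.mono θ).injective, hF.surj θ⟩)
    exact ⟨u, fun x => by rw [hu]; rfl⟩
  choose u hu using hunit
  obtain ⟨φ, hφ⟩ := FiberedCocycle.exists_map_one_eq (ω : T1) (u := u)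
    (by simpa only [hu] using hF.cont)
  exact ⟨φ, fun θ x => by rw [hφ, hu]⟩

theorem FiberedCocycle.fiberIter_eq {φ : FiberedCocycle (ω : T1)} (hφ : ∀ θ x, φ 1 θ x = F θ x)
    (n : ℕ) (θ : T1) (x : ℝ) : fiberIter ω F n θ x = φ n θ x := by
  induction n generalizing θ x with
  | zero => simp [fiberIter, map_zero]
  | succ n ih => rw [fiberIter, ih, Nat.cast_succ, map_add_apply, one_smul, hφ]

theorem HasRotNum.hasRotationNumber {φ : FiberedCocycle (ω : T1)} (hρ : HasRotNum ω F ρ)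
    (hφ : ∀ θ x, φ 1 θ x = F θ x) : φ.HasRotationNumber ρ := fun θ x => by
  simpa only [FiberedCocycle.fiberIter_eq hφ] using hρ θ x

theorem RatIndep.irrational (h : RatIndep ω ρ) : Irrational ω := by
  rintro ⟨r, rfl⟩
  have hr : (r.den : ℤ) = 0 := (h r.den 0 (-r.num) (by
    have := Rat.den_mul_eq_num r
    push_cast
    rw [zero_mul, add_zero, ← sub_eq_add_neg, sub_eq_zero]
    exact_mod_cast this)).1
  exact r.den_nz (by exact_mod_cast hr)

theorem RatIndep.natCast_mul_ne {N : ℕ} (h : RatIndep ω ρ) (hN : 0 < N) (p q : ℤ) :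
    N * ρ ≠ q + p * ω := fun heq => by
  have hN₀ : (N : ℤ) = 0 := (h (-p) N (-q) (by push_cast; linarith)).2.1
  omega

theorem fiberIter_le_fiberIter (hG : ∀ θ, Monotone (G θ)) (hle : ∀ θ x, F θ x ≤ G θ x) (n : ℕ)
    (θ : T1) {x y : ℝ} (hxy : x ≤ y) : fiberIter ω F n θ x ≤ fiberIter ω G n θ y := by
  induction n generalizing θ x y with
  | zero => exact hxy
  | succ _ ih => exact ih _ ((hle θ x).trans (hG θ hxy))

theorem HasRotNum.mono (hρ : HasRotNum ω F ρ) (hσ : HasRotNum ω G σ) (hG : ∀ θ, Monotone (G θ))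
    (hle : ∀ θ x, F θ x ≤ G θ x) : ρ ≤ σ :=
  le_of_tendsto_of_tendsto' (hρ 0 0) (hσ 0 0) fun n => by
    have := fiberIter_le_fiberIter (ω := ω) hG hle n 0 (le_refl (0 : ℝ))
    gcongr

theorem IsQpfLift.lt_of_ratIndep (hF : IsQpfLift ω F) (hG : IsQpfLift ω G)
    (hρ : HasRotNum ω F ρ) (hσ : HasRotNum ω G σ) (hind : RatIndep ω ρ)
    (hlt : ∀ θ x, F θ x < G θ x) : ρ < σ := by
  by_contra! hσρ
  obtain ⟨φ, hφ⟩ := hF.exists_cocycle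
  obtain ⟨ψ, hψ⟩ := hG.exists_cocycle
  obtain ⟨N, p, q, hN, hmul⟩ := (hρ.hasRotationNumber hφ).exists_mul_eq hind.irrational
    (hσ.hasRotationNumber hψ) hσρ (by simpa only [hφ, hψ] using hlt)
  exact hind.natCast_mul_ne hN p q hmul

end Lifts

theorem thmA_rationally_independent_strictly_monotone_general {ω ρ ρp ρm : ℝ}
    {F Fp Fm : T1 → ℝ → ℝ} (hF : IsQpfLift ω F) (hFp : IsQpfLift ω Fp) (hFm : IsQpfLift ω Fm)
    (hρ : HasRotNum ω F ρ) (hρp : HasRotNum ω Fp ρp) (hρm : HasRotNum ω Fm ρm)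
    (hind : RatIndep ω ρ) (hp : ∀ θ x, F θ x < Fp θ x) (hm : ∀ θ x, Fm θ x < F θ x) :
    ρm < ρ ∧ ρ < ρp := by
  refine ⟨lt_of_not_ge fun hle => ?_, hF.lt_of_ratIndep hFp hρ hρp hind hp⟩
  obtain rfl : ρ = ρm :=
    hle.antisymm (hρm.mono hρ (fun θ => (hF.mono θ).monotone) fun θ x => (hm θ x).le)
  exact (hFm.lt_of_ratIndep hF hρm hρ hind hm).false

/-- Theorem A, second part: if `ω`, `ρ(f)` and `1` are rationally
independent, then the fibered rotation number is strictly monotone at `f`. -/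
theorem thmA_rationally_independent_strictly_monotone
    (ω : ℝ) (hω : Irrational ω)
    (F : T1 → ℝ → ℝ) (hF : IsQpfLift ω F)
    (ρ : ℝ) (hρ : HasRotNum ω F ρ)
    (hind : RatIndep ω ρ)
    (ε : ℝ) (hε : 0 < ε)
    (ρp : ℝ) (hρp : HasRotNum ω (fun θ x => F θ x + ε) ρp)
    (ρm : ℝ) (hρm : HasRotNum ω (fun θ x => F θ x + (-ε)) ρm) :
    ρm < ρ ∧ ρ < ρp :=
  thmA_rationally_independent_strictly_monotone_general hF (hF.add_const ε) (hF.add_const (-ε))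
    hρ hρp hρm hind (fun _ _ => lt_add_of_pos_right _ hε)
    fun _ _ => add_lt_of_neg_right _ (neg_lt_zero.2 hε)
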